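/- arXiv:2604.02063 — 3 statements merged into one kernel-verified Lean document; each statement's English description precedes it below -/
import Mathlib

section
/- Let R be a finite nontrivial commutative local principal ideal ring. Let F₀ and F₁ be affine permutations of R that do not commute. Then any two affine permutations G and G′ of R, each of which commutes with both F₀ and F₁, commute with each other. In other words, the common centralizer of F₀ and F₁ inside the group of affine permutations of R is abelian. -/
/-- Two self-maps of a type commute under composition. -/
def MapsCommute {α : Type*} (f g : α → α) : Prop :=
  f ∘ g = g ∘ f

/-- `f : R → R` is an affine permutation: `x ↦ a·x + b` with `a` a unit of `R`. -/
def IsAffinePerm {R : Type*} [CommRing R] (f : R → R) : Prop :=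
  ∃ a : Rˣ, ∃ b : R, ∀ x, f x = (a : R) * x + b

/-!
Write an affine map as `x ↦ x + (α * x + β)` and record it by the vector `(α, β)`. Two affine maps
commute exactly when the determinant of their vectors vanishes. So let `u`, `v` have nonzero
determinant and let `w`, `w'` have zero determinant with both; we want `det (w, w') = 0`.

Divisibility in a local principal ideal ring is total. Hence, after possibly exchanging `u` and `v`,
`u = d • u₀` with `u₀` part of a basis `u₀, e` of determinant one, and `v = d • v₀`. The relation
between four vectors of the plane gives `det (w, e) * det (u₀, v) = 0`, whereas
`d * det (u₀, v) = det (u, v) ≠ 0`, so `d` divides `det (w, e)`, and likewise `det (w', e)`. Since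
`d * det (w, u₀) = d * det (w', u₀) = 0`, expanding `det (w, w')` in the basis `u₀, e` gives zero.
-/

theorem dvd_of_mul_eq_zero_of_mul_ne_zero {M : Type*} [CommMonoidWithZero M] [PreValuationRing M]
    {a b c : M} (hb : b * c = 0) (ha : a * c ≠ 0) : a ∣ b := by
  refine (ValuationRing.dvd_total a b).resolve_right fun hba ↦ ha ?_
  exact zero_dvd_iff.mp (hb ▸ mul_dvd_mul_right hba c)

theorem preValuationRing_of_isLocalRing_of_isBezout (R : Type*) [CommRing R] [IsLocalRing R]
    [IsBezout R] : PreValuationRing R := by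
  refine PreValuationRing.iff_dvd_total.mpr ⟨fun a b ↦ ?_⟩
  obtain ⟨r, s, hgcd⟩ := IsBezout.gcd_eq_sum a b
  obtain ⟨x, hx⟩ := IsBezout.gcd_dvd_left a b
  rcases IsLocalRing.isUnit_or_isUnit_one_sub_self (r * x) with hunit | hunit
  · have ha : a ∣ IsBezout.gcd a b :=
      (isUnit_of_mul_isUnit_right hunit).dvd_mul_right.mp (dvd_of_eq hx)
    exact .inl (ha.trans (IsBezout.gcd_dvd_right a b))
  · have hb : b ∣ IsBezout.gcd a b := by
      refine hunit.dvd_mul_right.mp ⟨s, ?_⟩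
      linear_combination -hgcd + r * hx
    exact .inr (hb.trans (IsBezout.gcd_dvd_left a b))

section PairDet

variable {R : Type*} [CommRing R]

/-- The determinant of the `2 × 2` matrix with columns `u` and `v`, the standard area form on the
plane `R × R`. -/
def pairDet (u v : R × R) : R :=
  u.1 * v.2 - u.2 * v.1

theorem neg_pairDet (u v : R × R) : -pairDet u v = pairDet v u := by
  simp only [pairDet]
  ring

theorem pairDet_smul_left (c : R) (u v : R × R) : pairDet (c • u) v = c * pairDet u v := by
  simp only [pairDet, Prod.smul_fst, Prod.smul_snd, smul_eq_mul]
  ring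

theorem pairDet_smul_right (c : R) (u v : R × R) : pairDet u (c • v) = c * pairDet u v := by
  simp only [pairDet, Prod.smul_fst, Prod.smul_snd, smul_eq_mul]
  ring

theorem pairDet_mul_pairDet_cyclic (w x y z : R × R) :
    pairDet w x * pairDet y z + pairDet w y * pairDet z x + pairDet w z * pairDet x y = 0 := by
  simp only [pairDet]
  ring

theorem exists_eq_smul_and_pairDet_eq_one [PreValuationRing R] (u : R × R) :
    ∃ (d : R) (u₀ e : R × R), u = d • u₀ ∧ pairDet u₀ e = 1 := by
  obtain ⟨a, b⟩ := u
  rcases ValuationRing.dvd_total a b with ⟨t, rfl⟩ | ⟨t, rfl⟩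
  · exact ⟨a, (1, t), (0, 1), by simp, by simp [pairDet]⟩
  · exact ⟨b, (t, 1), (-1, 0), by simp, by simp [pairDet]⟩

theorem pairDet_mul_pairDet_eq_zero {d : R} {u v e w : R × R}
    (hwu : pairDet w (d • u) = 0) (hwv : pairDet w (d • v) = 0) (hue : pairDet u e = 1) :
    pairDet w e * pairDet u (d • v) = 0 := by
  rw [pairDet_smul_right] at *
  linear_combination d * pairDet_mul_pairDet_cyclic w e u v - pairDet v e * hwu
    - pairDet e u * hwv

theorem dvd_pairDet_of_pairDet_ne_zero [PreValuationRing R] {d : R} {u v e w : R × R}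
    (huv : pairDet (d • u) (d • v) ≠ 0) (hwu : pairDet w (d • u) = 0)
    (hwv : pairDet w (d • v) = 0) (hue : pairDet u e = 1) : d ∣ pairDet w e :=
  dvd_of_mul_eq_zero_of_mul_ne_zero (pairDet_mul_pairDet_eq_zero hwu hwv hue)
    (pairDet_smul_left d u (d • v) ▸ huv)

theorem pairDet_eq_zero_of_dvd {d : R} {u e w w' : R × R} (hue : pairDet u e = 1)
    (hwu : pairDet w (d • u) = 0) (hwu' : pairDet w' (d • u) = 0)
    (hwe : d ∣ pairDet w e) (hwe' : d ∣ pairDet w' e) : pairDet w w' = 0 := by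
  rw [pairDet_smul_right] at hwu hwu'
  obtain ⟨s, hs⟩ := hwe
  obtain ⟨s', hs'⟩ := hwe'
  calc
    pairDet w w' = pairDet w u * pairDet w' e - pairDet w e * pairDet w' u := by
      linear_combination pairDet_mul_pairDet_cyclic w w' u e - pairDet w w' * hue
        + pairDet w u * neg_pairDet w' e
    _ = s' * (d * pairDet w u) - s * (d * pairDet w' u) := by rw [hs, hs']; ring
    _ = 0 := by rw [hwu, hwu']; ring

theorem pairDet_eq_zero_of_pairDet_ne_zero [PreValuationRing R] {u v w w' : R × R}
    (huv : pairDet u v ≠ 0) (hwu : pairDet w u = 0) (hwv : pairDet w v = 0)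
    (hwu' : pairDet w' u = 0) (hwv' : pairDet w' v = 0) : pairDet w w' = 0 := by
  obtain ⟨c, u₀, e, rfl, hue⟩ := exists_eq_smul_and_pairDet_eq_one u
  obtain ⟨d, v₀, f, rfl, hvf⟩ := exists_eq_smul_and_pairDet_eq_one v
  wlog hcd : c ∣ d generalizing c u₀ e d v₀ f
  · have hvu : pairDet (d • v₀) (c • u₀) ≠ 0 := by rwa [← neg_pairDet, neg_ne_zero]
    exact this d v₀ f hvf hwv hwv' c u₀ e hue hwu hwu' hvu
      ((ValuationRing.dvd_total c d).resolve_left hcd)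
  obtain ⟨t, rfl⟩ := hcd
  rw [mul_smul] at huv hwv hwv'
  exact pairDet_eq_zero_of_dvd hue hwu hwu'
    (dvd_pairDet_of_pairDet_ne_zero huv hwu hwv hue)
    (dvd_pairDet_of_pairDet_ne_zero huv hwu' hwv' hue)

end PairDet

section AffineMaps

variable {R : Type*} [CommRing R]

/-- `f : R → R` is an affine map `x ↦ a * x + b`, where `a` need not be a unit. -/
def IsAffineMap (f : R → R) : Prop :=
  ∃ a b : R, ∀ x, f x = a * x + b

theorem IsAffinePerm.isAffineMap {f : R → R} : IsAffinePerm f → IsAffineMap f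
  | ⟨a, b, h⟩ => ⟨a, b, h⟩

/-- The coefficients `(a - 1, b)` of the displacement `f x - x` of an affine map
`f x = a * x + b`, read off from the values of `f` at `0` and `1`. -/
def displacementVector (f : R → R) : R × R :=
  (f 1 - f 0 - 1, f 0)

theorem IsAffineMap.apply_eq {f : R → R} (hf : IsAffineMap f) (x : R) :
    f x = x + ((displacementVector f).1 * x + (displacementVector f).2) := by
  obtain ⟨a, b, h⟩ := hf
  simp only [displacementVector, h]
  ring

theorem IsAffineMap.mapsCommute_iff {f g : R → R} (hf : IsAffineMap f) (hg : IsAffineMap g) :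
    MapsCommute f g ↔ pairDet (displacementVector f) (displacementVector g) = 0 := by
  have commutator (x : R) :
      f (g x) - g (f x) = pairDet (displacementVector f) (displacementVector g) := by
    rw [hf.apply_eq (g x), hg.apply_eq (f x), hf.apply_eq x, hg.apply_eq x, pairDet]
    ring
  simp only [MapsCommute, funext_iff, Function.comp_apply, ← sub_eq_zero (b := g _), commutator,
    forall_const]

theorem common_centralizer_abelian_general [PreValuationRing R] {F₀ F₁ G G' : R → R}
    (hF₀ : IsAffineMap F₀) (hF₁ : IsAffineMap F₁) (hnc : ¬ MapsCommute F₀ F₁)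
    (hG : IsAffineMap G) (hG' : IsAffineMap G')
    (hG0 : MapsCommute G F₀) (hG1 : MapsCommute G F₁)
    (hG'0 : MapsCommute G' F₀) (hG'1 : MapsCommute G' F₁) :
    MapsCommute G G' := by
  rw [hF₀.mapsCommute_iff hF₁] at hnc
  rw [hG.mapsCommute_iff hF₀] at hG0
  rw [hG.mapsCommute_iff hF₁] at hG1
  rw [hG'.mapsCommute_iff hF₀] at hG'0
  rw [hG'.mapsCommute_iff hF₁] at hG'1
  rw [hG.mapsCommute_iff hG']
  exact pairDet_eq_zero_of_pairDet_ne_zero hnc hG0 hG1 hG'0 hG'1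

end AffineMaps

/-- **Local obstruction.** Let `R` be a finite nontrivial commutative local principal
ideal ring, and let `F₀`, `F₁` be noncommuting affine permutations of `R`. Then any two
affine permutations `G`, `G'` of `R`, each commuting with both `F₀` and `F₁`, commute
with each other: the common centralizer of `F₀` and `F₁` is abelian. -/
theorem common_centralizer_abelian {R : Type*} [CommRing R] [Finite R] [Nontrivial R]
    [IsLocalRing R] [IsPrincipalIdealRing R]
    (F₀ F₁ : R → R) (hF₀ : IsAffinePerm F₀) (hF₁ : IsAffinePerm F₁)
    (hnc : ¬ MapsCommute F₀ F₁)
    (G G' : R → R) (hG : IsAffinePerm G) (hG' : IsAffinePerm G')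
    (hG0 : MapsCommute G F₀) (hG1 : MapsCommute G F₁)
    (hG'0 : MapsCommute G' F₀) (hG'1 : MapsCommute G' F₁) :
    MapsCommute G G' := by
  have := preValuationRing_of_isLocalRing_of_isBezout R
  exact common_centralizer_abelian_general hF₀.isAffineMap hF₁.isAffineMap hnc
    hG.isAffineMap hG'.isAffineMap hG0 hG1 hG'0 hG'1
end

section
/- Let n ≥ 2 be an integer. Then the group of affine permutations of the ring ℤ/nℤ contains a cross-commuting nonabelian square if and only if there exist two distinct primes p and q dividing n such that p^{v_p(n)} > 2 and q^{v_q(n)} > 2, where v_p(n) denotes the exponent of p in the prime factorization of n (i.e., at least two of the prime-power factors in the factorization of n exceed 2). -/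
/-- A cross-commuting nonabelian square exists in the affine permutation group of `R`. -/
def HasCrossCommutingNonabelianSquare (R : Type*) [CommRing R] : Prop :=
  ∃ F₀ F₁ G₀ G₁ : R → R,
    IsAffinePerm F₀ ∧ IsAffinePerm F₁ ∧ IsAffinePerm G₀ ∧ IsAffinePerm G₁ ∧
    MapsCommute F₀ G₀ ∧ MapsCommute F₀ G₁ ∧ MapsCommute F₁ G₀ ∧ MapsCommute F₁ G₁ ∧
    ¬ MapsCommute F₀ F₁ ∧ ¬ MapsCommute G₀ G₁

/-!
The maps `x ↦ a x + b` and `x ↦ c x + d` commute iff the vectors `(a - 1, b)` and `(c - 1, d)` are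
parallel. If divisibility is total in `R`, pick among the entries of all four vectors of a square
one that divides the others. Say that it lies in one of the first two vectors: then both of
the last two are parallel to this vector and divisible by that entry, which makes them parallel to
each other, so no square exists.

By the Chinese remainder theorem `ℤ/nℤ` is a product of rings `ℤ/p^kℤ` of this kind. The two
noncommuting pairs of a square therefore fail to commute in different factors, and a factor has a
noncommuting pair iff it has a unit other than `1`. Conversely, noncommuting pairs in two different
factors, extended by the identity, form a square.
-/

section Parallel

variable {R κ : Type*}

/-- Two coordinate vectors over a ring are parallel if the `2 × 2` minors of the matrix with these
rows vanish. Over a ring with zero divisors this does not make one of them a multiple of the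
other, and it is not transitive even on nonzero vectors. -/
def Parallel [Mul R] (v w : κ → R) : Prop :=
  ∀ i j, v i * w j = v j * w i

theorem Parallel.symm [CommMagma R] {v w : κ → R} (h : Parallel v w) : Parallel w v := fun i j ↦ by
  rw [mul_comm, ← h, mul_comm]

theorem parallel_pair_iff [CommRing R] {a b c d : R} :
    Parallel ![a, b] ![c, d] ↔ a * d = c * b := by
  simp [Parallel, Fin.forall_fin_two, mul_comm, eq_comm]

theorem Parallel.of_common_of_dvd [CommRing R] {v w w' : κ → R} {k : κ}
    (hv : ∀ i, v k ∣ v i) (hw : ∀ i, v k ∣ w i) (hw' : ∀ i, v k ∣ w' i)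
    (h : Parallel v w) (h' : Parallel v w') : Parallel w w' := by
  choose s hs using hv
  choose x hx using hw
  choose y hy using hw'
  have product_eq (i j : κ) : w i * w' j = s i * s j * (w k * w' k) := by
    have hi : v k * w i = v k * s i * w k := by rw [h k i, hs i]
    have hj : v k * w' j = v k * s j * w' k := by rw [h' k j, hs j]
    calc
      w i * w' j = x i * (v k * w' j) := by rw [hx i]; ring
      _ = w i * (s j * w' k) := by rw [hj, hx i]; ring
      _ = s j * y k * (v k * w i) := by rw [hy k]; ring
      _ = s i * s j * (w k * w' k) := by rw [hi, hy k]; ring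
  intro i j
  rw [product_eq i j, product_eq j i, mul_comm (s i)]

theorem exists_forall_dvd [Monoid R] [PreValuationRing R] {ι : Type*} [Finite ι] [Nonempty ι]
    (f : ι → R) : ∃ i, ∀ j, f i ∣ f j := by
  have directed : Directed (fun a b ↦ b ∣ a) f := fun i j ↦
    (ValuationRing.dvd_total (f i) (f j)).elim (fun h ↦ ⟨i, dvd_rfl, h⟩) (fun h ↦ ⟨j, h, dvd_rfl⟩)
  exact directed.finite_le id

theorem parallel_or_parallel_of_cross [CommRing R] [PreValuationRing R] [Finite κ] [Nonempty κ]
    {ι ι' : Type*} [Finite ι] [Nonempty ι] [Finite ι'] [Nonempty ι']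
    {v : ι → κ → R} {w : ι' → κ → R} (h : ∀ i j, Parallel (v i) (w j)) :
    (∀ i i', Parallel (v i) (v i')) ∨ ∀ j j', Parallel (w j) (w j') := by
  obtain ⟨⟨i, k⟩, hv⟩ := exists_forall_dvd fun m : ι × κ ↦ v m.1 m.2
  obtain ⟨⟨j, l⟩, hw⟩ := exists_forall_dvd fun m : ι' × κ ↦ w m.1 m.2
  rcases ValuationRing.dvd_total (v i k) (w j l) with hvw | hwv
  · have dvd_w (j' : ι') (m : κ) : v i k ∣ w j' m := hvw.trans (hw (j', m))
    exact .inr fun j₁ j₂ ↦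
      .of_common_of_dvd (fun m ↦ hv (i, m)) (dvd_w j₁) (dvd_w j₂) (h i j₁) (h i j₂)
  · have dvd_v (i' : ι) (m : κ) : w j l ∣ v i' m := hwv.trans (hv (i', m))
    exact .inl fun i₁ i₂ ↦
      .of_common_of_dvd (fun m ↦ hw (j, m)) (dvd_v i₁) (dvd_v i₂) (h i₁ j).symm (h i₂ j).symm

end Parallel

section AffinePerm

variable {R S : Type*} [CommRing R] [CommRing S]

theorem isAffinePerm_id : IsAffinePerm (id : R → R) :=
  ⟨1, 0, by simp⟩

theorem mapsCommute_iff_of_affine {f g : R → R} {a b c d : R}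
    (hf : ∀ x, f x = a * x + b) (hg : ∀ x, g x = c * x + d) :
    MapsCommute f g ↔ (a - 1) * d = (c - 1) * b := by
  simp only [MapsCommute, funext_iff, Function.comp_apply, hf, hg]
  exact ⟨fun h ↦ by linear_combination h 0, fun h x ↦ by linear_combination h⟩

theorem exists_not_mapsCommute_iff :
    (∃ f g : R → R, IsAffinePerm f ∧ IsAffinePerm g ∧ ¬ MapsCommute f g) ↔ Nontrivial Rˣ := by
  constructor
  · rintro ⟨f, g, ⟨a, b, hf⟩, ⟨c, d, hg⟩, hfg⟩
    by_contra trivial_units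
    have : Subsingleton Rˣ := not_nontrivial_iff_subsingleton.mp trivial_units
    rw [mapsCommute_iff_of_affine hf hg, Subsingleton.elim a 1, Subsingleton.elim c 1] at hfg
    simp at hfg
  · intro _
    obtain ⟨a, ha⟩ := exists_ne (1 : Rˣ)
    have hmul (x : R) : a * x = a * x + 0 := (add_zero _).symm
    have hadd (x : R) : x + 1 = (1 : Rˣ) * x + 1 := by simp
    refine ⟨(a * ·), (· + 1), ⟨a, 0, hmul⟩, ⟨1, 1, hadd⟩, ?_⟩
    rw [mapsCommute_iff_of_affine hmul hadd]
    simpa [sub_eq_zero] using ha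

theorem not_hasCrossCommutingNonabelianSquare [PreValuationRing R] :
    ¬ HasCrossCommutingNonabelianSquare R := by
  rintro ⟨F₀, F₁, G₀, G₁, ⟨a₀, b₀, hF₀⟩, ⟨a₁, b₁, hF₁⟩, ⟨c₀, d₀, hG₀⟩, ⟨c₁, d₁, hG₁⟩,
    h₀₀, h₀₁, h₁₀, h₁₁, hF, hG⟩
  rw [mapsCommute_iff_of_affine hF₀ hG₀, ← parallel_pair_iff] at h₀₀
  rw [mapsCommute_iff_of_affine hF₀ hG₁, ← parallel_pair_iff] at h₀₁
  rw [mapsCommute_iff_of_affine hF₁ hG₀, ← parallel_pair_iff] at h₁₀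
  rw [mapsCommute_iff_of_affine hF₁ hG₁, ← parallel_pair_iff] at h₁₁
  rw [mapsCommute_iff_of_affine hF₀ hF₁, ← parallel_pair_iff] at hF
  rw [mapsCommute_iff_of_affine hG₀ hG₁, ← parallel_pair_iff] at hG
  let v : Fin 2 → Fin 2 → R := ![![a₀ - 1, b₀], ![a₁ - 1, b₁]]
  let w : Fin 2 → Fin 2 → R := ![![c₀ - 1, d₀], ![c₁ - 1, d₁]]
  have cross : ∀ i j, Parallel (v i) (w j) := by
    simpa [Fin.forall_fin_two, v, w] using ⟨⟨h₀₀, h₀₁⟩, h₁₀, h₁₁⟩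
  exact (parallel_or_parallel_of_cross cross).elim (fun h ↦ hF (h 0 1)) (fun h ↦ hG (h 0 1))

theorem mapsCommute_conj_iff {α β : Type*} (e : α ≃ β) {f g : α → α} :
    MapsCommute (e.conj f) (e.conj g) ↔ MapsCommute f g := by
  simp only [MapsCommute, ← Equiv.conj_comp, e.conj.apply_eq_iff_eq]

theorem IsAffinePerm.conj (e : R ≃+* S) {f : R → R} (hf : IsAffinePerm f) :
    IsAffinePerm (e.toEquiv.conj f) := by
  obtain ⟨a, b, hf⟩ := hf
  exact ⟨Units.map e a, e b, by simp [hf]⟩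

theorem HasCrossCommutingNonabelianSquare.of_ringEquiv (e : R ≃+* S)
    (h : HasCrossCommutingNonabelianSquare R) : HasCrossCommutingNonabelianSquare S := by
  obtain ⟨F₀, F₁, G₀, G₁, hF₀, hF₁, hG₀, hG₁, h⟩ := h
  exact ⟨_, _, _, _, hF₀.conj e, hF₁.conj e, hG₀.conj e, hG₁.conj e,
    by simpa only [mapsCommute_conj_iff] using h⟩

theorem hasCrossCommutingNonabelianSquare_congr (e : R ≃+* S) :
    HasCrossCommutingNonabelianSquare R ↔ HasCrossCommutingNonabelianSquare S :=
  ⟨.of_ringEquiv e, .of_ringEquiv e.symm⟩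

end AffinePerm

section Pi

variable {ι : Type*} {R : ι → Type*}

theorem mapsCommute_piMap_iff [∀ i, Nonempty (R i)] {f g : ∀ i, R i → R i} :
    MapsCommute (Pi.map f) (Pi.map g) ↔ ∀ i, MapsCommute (f i) (g i) := by
  refine ⟨fun h i ↦ funext fun x ↦ ?_, fun h ↦ funext fun x ↦ funext fun i ↦ congrFun (h i) (x i)⟩
  obtain ⟨y, rfl⟩ := Function.surjective_eval i x
  exact congrFun (congrFun h y) i

theorem isAffinePerm_pi_iff [∀ i, CommRing (R i)] {F : (∀ i, R i) → ∀ i, R i} :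
    IsAffinePerm F ↔ ∃ f : ∀ i, R i → R i, (∀ i, IsAffinePerm (f i)) ∧ Pi.map f = F := by
  constructor
  · rintro ⟨a, b, hF⟩
    exact ⟨fun i x ↦ (a : ∀ i, R i) i * x + b i,
      fun i ↦ ⟨MulEquiv.piUnits a i, b i, fun _ ↦ rfl⟩, funext fun x ↦ (hF x).symm⟩
  · rintro ⟨f, hf, rfl⟩
    choose a b hf using hf
    exact ⟨MulEquiv.piUnits.symm a, b, fun x ↦ funext fun i ↦ hf i (x i)⟩

/-- The self-map of a product that acts by `f` on the factor at `i` and fixes the other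
coordinates. -/
def mapAt [DecidableEq ι] (i : ι) (f : R i → R i) : (∀ j, R j) → ∀ j, R j :=
  Pi.map (Function.update (fun _ ↦ id) i f)

theorem IsAffinePerm.mapAt [DecidableEq ι] [∀ i, CommRing (R i)] {i : ι} {f : R i → R i}
    (hf : IsAffinePerm f) : IsAffinePerm (mapAt i f) := by
  refine isAffinePerm_pi_iff.mpr ⟨_, fun j ↦ ?_, rfl⟩
  rcases eq_or_ne j i with rfl | hj
  · simpa using hf
  · simpa [hj] using isAffinePerm_id

theorem mapsCommute_mapAt_iff [DecidableEq ι] [∀ i, Nonempty (R i)] {i : ι} {f g : R i → R i} :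
    MapsCommute (mapAt i f) (mapAt i g) ↔ MapsCommute f g := by
  refine mapsCommute_piMap_iff.trans ⟨fun h ↦ by simpa using h i, fun h j ↦ ?_⟩
  rcases eq_or_ne j i with rfl | hj
  · simpa using h
  · simp [hj, MapsCommute]

theorem mapsCommute_mapAt_of_ne [DecidableEq ι] {i j : ι} (hij : i ≠ j) (f : R i → R i)
    (g : R j → R j) : MapsCommute (mapAt i f) (mapAt j g) := by
  ext x k
  rcases eq_or_ne k i with rfl | hk
  · simp [mapAt, hij]
  · simp [mapAt, hk]

theorem hasCrossCommutingNonabelianSquare_pi_iff [∀ i, CommRing (R i)]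
    [∀ i, PreValuationRing (R i)] :
    HasCrossCommutingNonabelianSquare (∀ i, R i) ↔
      ∃ i j, i ≠ j ∧ Nontrivial (R i)ˣ ∧ Nontrivial (R j)ˣ := by
  classical
  simp only [← exists_not_mapsCommute_iff]
  constructor
  · rintro ⟨F₀, F₁, G₀, G₁, hF₀, hF₁, hG₀, hG₁, h⟩
    obtain ⟨f₀, hf₀, rfl⟩ := isAffinePerm_pi_iff.mp hF₀
    obtain ⟨f₁, hf₁, rfl⟩ := isAffinePerm_pi_iff.mp hF₁
    obtain ⟨g₀, hg₀, rfl⟩ := isAffinePerm_pi_iff.mp hG₀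
    obtain ⟨g₁, hg₁, rfl⟩ := isAffinePerm_pi_iff.mp hG₁
    simp only [mapsCommute_piMap_iff, not_forall] at h
    obtain ⟨h₀₀, h₀₁, h₁₀, h₁₁, ⟨i, hf⟩, j, hg⟩ := h
    refine ⟨i, j, ?_, ⟨_, _, hf₀ i, hf₁ i, hf⟩, _, _, hg₀ j, hg₁ j, hg⟩
    rintro rfl
    exact not_hasCrossCommutingNonabelianSquare ⟨_, _, _, _, hf₀ i, hf₁ i, hg₀ i, hg₁ i,
      h₀₀ i, h₀₁ i, h₁₀ i, h₁₁ i, hf, hg⟩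
  · rintro ⟨i, j, hij, ⟨f₀, f₁, hf₀, hf₁, hf⟩, g₀, g₁, hg₀, hg₁, hg⟩
    have cross (f : R i → R i) (g : R j → R j) := mapsCommute_mapAt_of_ne hij f g
    exact ⟨_, _, _, _, hf₀.mapAt, hf₁.mapAt, hg₀.mapAt, hg₁.mapAt,
      cross _ _, cross _ _, cross _ _, cross _ _,
      mapsCommute_mapAt_iff.not.mpr hf, mapsCommute_mapAt_iff.not.mpr hg⟩

end Pi

section ZMod

theorem preValuationRing_zmod_prime_pow (p k : ℕ) [Fact p.Prime] :
    PreValuationRing (ZMod (p ^ k)) :=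
  Function.Surjective.preValuationRing (PadicInt.toZModPow (p := p) k).toMulHom
    (ZMod.ringHom_surjective (PadicInt.toZModPow k))

theorem nontrivial_units_zmod_iff {n : ℕ} [NeZero n] : Nontrivial (ZMod n)ˣ ↔ 2 < n := by
  rw [← Fintype.one_lt_card_iff_nontrivial, ZMod.card_units_eq_totient]
  have n_pos := NeZero.pos n
  have totient_pos := Nat.totient_pos.mpr n_pos
  have totient_eq_one := Nat.totient_eq_one_iff (n := n)
  omega

end ZMod

/-- **Exact classification for residue rings (prime-power version).** For `n ≥ 2`, the
affine group of `ℤ/nℤ` contains a cross-commuting nonabelian square if and only if at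
least two prime-power factors `p ^ v_p(n)` of `n` exceed `2`. -/
theorem zmod_classification_factorization (n : ℕ) (hn : 2 ≤ n) :
    HasCrossCommutingNonabelianSquare (ZMod n) ↔
      ∃ p q : ℕ, p.Prime ∧ q.Prime ∧ p ≠ q ∧ p ∣ n ∧ q ∣ n ∧
        2 < p ^ (n.factorization p) ∧ 2 < q ^ (n.factorization q) := by
  have hn₀ : n ≠ 0 := by omega
  have prime (p : n.primeFactors) : Fact (p : ℕ).Prime := ⟨Nat.prime_of_mem_primeFactors p.2⟩
  have preValuationRing (p : n.primeFactors) :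
      PreValuationRing (ZMod ((p : ℕ) ^ n.factorization p)) :=
    preValuationRing_zmod_prime_pow _ _
  rw [hasCrossCommutingNonabelianSquare_congr (ZMod.equivPi n hn₀),
    hasCrossCommutingNonabelianSquare_pi_iff]
  simp only [nontrivial_units_zmod_iff]
  constructor
  · rintro ⟨⟨p, hp⟩, ⟨q, hq⟩, hpq, hp₂, hq₂⟩
    exact ⟨p, q, Nat.prime_of_mem_primeFactors hp, Nat.prime_of_mem_primeFactors hq,
      Subtype.coe_ne_coe.mpr hpq, Nat.dvd_of_mem_primeFactors hp, Nat.dvd_of_mem_primeFactors hq,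
      hp₂, hq₂⟩
  · rintro ⟨p, q, hp, hq, hpq, hpn, hqn, hp₂, hq₂⟩
    exact ⟨⟨p, hp.mem_primeFactors hpn hn₀⟩, ⟨q, hq.mem_primeFactors hqn hn₀⟩,
      Subtype.coe_ne_coe.mp hpq, hp₂, hq₂⟩
end

section
/- Let m ≥ 1 and let V be a finite type. Let F, G : ℤ/mℤ → Matrix V V 𝔽₂ be families of matrices over the field with two elements such that F(i) · G(j) = G(j) · F(i) for all i, j ∈ ℤ/mℤ. Then for all j, k ∈ {0, 1}, the block-product sum ∑_{ℓ ∈ ℤ/mℤ} ( F(ℓ − j) · G(k − ℓ) + G(k − ℓ) · F(ℓ − j) ) equals the zero matrix; consequently, the two-row block matrix Ĥ_X whose (j, ℓ) block is F(ℓ − j) for ℓ in the first m block-columns and G(ℓ − j) (with appropriate index shift) in the last m block-columns, and the block matrix Ĥ_Z whose transpose pairs the G-blocks against the F-blocks as in the Hagiwara–Imai construction, satisfy Ĥ_X · Ĥ_Zᵀ = 0 over 𝔽₂. -/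
open Matrix

/-!
The right half of the product `Ĥ_X * Ĥ_Zᵀ` contributes `G (ℓ - j) * F (k - ℓ)`. The reflection
`ℓ ↦ j + k - ℓ` of the index group turns it into `G (k - ℓ) * F (ℓ - j)`, the left half's term with
its factors swapped. So each block is a sum of `x * y + y * x` with `x` and `y` commuting, which
vanishes in characteristic two.
-/

theorem sum_mul_add_mul_eq_zero_of_commute {ι S : Type*} [NonUnitalNonAssocRing S]
    [Module (ZMod 2) S] {s : Finset ι} {f g : ι → S} (hfg : ∀ i ∈ s, Commute (f i) (g i)) :
    ∑ i ∈ s, (f i * g i + g i * f i) = 0 :=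
  Finset.sum_eq_zero fun i hi => by rw [(hfg i hi).eq, ZModModule.add_self]

theorem sum_translate_mul_reflect {A S : Type*} [AddCommGroup A] [Fintype A]
    [NonUnitalNonAssocSemiring S] (f g : A → S) (a b : A) :
    ∑ x, f (x - a) * g (b - x) = ∑ x, f (b - x) * g (x - a) :=
  Fintype.sum_equiv (Equiv.subLeft (a + b)) _ _ fun x => by
    rw [Equiv.subLeft_apply, show b - (a + b - x) = x - a by abel,
      show a + b - x - a = b - x by abel]

theorem matrixComp_mul_matrixComp {I J K V R : Type*} [Fintype J] [Fintype V]
    [NonUnitalNonAssocSemiring R] (M : Matrix I J (Matrix V V R)) (N : Matrix J K (Matrix V V R)) :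
    comp I J V V R M * comp J K V V R N = comp I K V V R (M * N) := by
  ext ⟨i, v⟩ ⟨k, w⟩
  simp only [comp_apply, mul_apply, Matrix.sum_apply, Fintype.sum_prod_type]

section HagiwaraImai

variable {A J K V R : Type*} [AddCommGroup A]

/-- The block array `Ĥ_X` of the Hagiwara–Imai construction, with block columns indexed by two
copies of an abelian group `A` in place of `ℤ/mℤ`. Row `j` consists of the families `F` and `G`
translated by `s j`. -/
def hagiwaraImaiX (s : J → A) (F G : A → Matrix V V R) : Matrix J (A ⊕ A) (Matrix V V R) :=
  fromCols (of fun j ℓ => F (ℓ - s j)) (of fun j ℓ => G (ℓ - s j))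

/-- The block array `Ĥ_Z` of the Hagiwara–Imai construction. Row `k` consists of the transposed
families `G` and `F` reflected through `t k`. The right half uses `F (t k - ℓ)`, not `F (t k + ℓ)`,
because the two halves of `Ĥ_X * Ĥ_Zᵀ` must be the same convolution with the factors swapped. -/
def hagiwaraImaiZ (t : K → A) (F G : A → Matrix V V R) : Matrix K (A ⊕ A) (Matrix V V R) :=
  fromCols (of fun k ℓ => (G (t k - ℓ))ᵀ) (of fun k ℓ => (F (t k - ℓ))ᵀ)

theorem hagiwaraImaiX_mul_transpose_hagiwaraImaiZ_apply [Fintype A] [Fintype V]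
    [NonUnitalNonAssocSemiring R] (F G : A → Matrix V V R) (s : J → A) (t : K → A) (j : J) (k : K) :
    (hagiwaraImaiX s F G * (hagiwaraImaiZ t F G)ᵀ.map (·ᵀ)) j k =
      ∑ ℓ, (F (ℓ - s j) * G (t k - ℓ) + G (t k - ℓ) * F (ℓ - s j)) :=
  calc (hagiwaraImaiX s F G * (hagiwaraImaiZ t F G)ᵀ.map (·ᵀ)) j k
    _ = ∑ ℓ, F (ℓ - s j) * G (t k - ℓ) + ∑ ℓ, G (ℓ - s j) * F (t k - ℓ) := by
      simp only [hagiwaraImaiX, hagiwaraImaiZ, mul_apply, Fintype.sum_sum_type, map_apply,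
        transpose_apply, fromCols_apply_inl, fromCols_apply_inr, of_apply, transpose_transpose]
    _ = ∑ ℓ, (F (ℓ - s j) * G (t k - ℓ) + G (t k - ℓ) * F (ℓ - s j)) := by
      rw [sum_translate_mul_reflect G F, Finset.sum_add_distrib]

theorem hagiwara_imai_orthogonality_general [Fintype A] [Fintype V] [NonUnitalNonAssocRing R]
    [Module (ZMod 2) R] (F G : A → Matrix V V R) (hcomm : ∀ a b, F a * G b = G b * F a)
    (s : J → A) (t : K → A)
    (HX : Matrix (J × V) ((A ⊕ A) × V) R) (HZ : Matrix (K × V) ((A ⊕ A) × V) R)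
    (hHXF : ∀ j v ℓ w, HX (j, v) (Sum.inl ℓ, w) = F (ℓ - s j) v w)
    (hHXG : ∀ j v ℓ w, HX (j, v) (Sum.inr ℓ, w) = G (ℓ - s j) v w)
    (hHZG : ∀ k v ℓ w, HZ (k, v) (Sum.inl ℓ, w) = (G (t k - ℓ))ᵀ v w)
    (hHZF : ∀ k v ℓ w, HZ (k, v) (Sum.inr ℓ, w) = (F (t k - ℓ))ᵀ v w) :
    (∀ j k, ∑ ℓ, (F (ℓ - s j) * G (t k - ℓ) + G (t k - ℓ) * F (ℓ - s j)) = 0) ∧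
      HX * HZᵀ = 0 := by
  have block_sum_eq_zero (j : J) (k : K) :
      ∑ ℓ, (F (ℓ - s j) * G (t k - ℓ) + G (t k - ℓ) * F (ℓ - s j)) = 0 :=
    sum_mul_add_mul_eq_zero_of_commute fun ℓ _ => hcomm (ℓ - s j) (t k - ℓ)
  have HX_eq : HX = comp _ _ _ _ R (hagiwaraImaiX s F G) := by
    ext ⟨j, v⟩ ⟨ℓ | ℓ, w⟩
    exacts [hHXF j v ℓ w, hHXG j v ℓ w]
  have HZ_eq : HZ = comp _ _ _ _ R (hagiwaraImaiZ t F G) := by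
    ext ⟨k, v⟩ ⟨ℓ | ℓ, w⟩
    exacts [hHZG k v ℓ w, hHZF k v ℓ w]
  have block_product_eq_zero : hagiwaraImaiX s F G * (hagiwaraImaiZ t F G)ᵀ.map (·ᵀ) = 0 := by
    ext1 j k
    rw [hagiwaraImaiX_mul_transpose_hagiwaraImaiZ_apply, block_sum_eq_zero, Matrix.zero_apply]
  refine ⟨block_sum_eq_zero, ?_⟩
  rw [HX_eq, HZ_eq, transpose_comp, matrixComp_mul_matrixComp, block_product_eq_zero]
  rfl

end HagiwaraImai

/-- **Hagiwara–Imai orthogonality.** Let `F, G : ℤ/mℤ → Matrix V V 𝔽₂` be families of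
matrices over `𝔽₂ = ℤ/2ℤ` such that `F i` commutes with `G j` for all `i, j`. Then for
all `j, k ∈ {0,1}` the block-product sum
`∑ ℓ, (F (ℓ - j) * G (k - ℓ) + G (k - ℓ) * F (ℓ - j))` vanishes; consequently the
two-row Hagiwara–Imai block arrays `Ĥ_X` and `Ĥ_Z` (with rows indexed by `Fin 2 × V`,
block columns indexed by `(ℤ/mℤ ⊕ ℤ/mℤ) × V`, the `(j, ℓ)` block of `Ĥ_X` being
`F (ℓ - j)` on the left half and `G (ℓ - j)` on the right half, and the `(k, ℓ)` block
of `Ĥ_Z` being `(G (k - ℓ))ᵀ` on the left half and `(F (k - ℓ))ᵀ` on the right half, so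
that the `(j, k)` block of `Ĥ_X * Ĥ_Zᵀ` is exactly the sum above) satisfy
`Ĥ_X * Ĥ_Zᵀ = 0` over `𝔽₂`. -/
theorem hagiwara_imai_orthogonality (m : ℕ) [NeZero m] (hm : 1 ≤ m)
    (V : Type*) [Fintype V]
    (F G : ZMod m → Matrix V V (ZMod 2))
    (hcomm : ∀ i j : ZMod m, F i * G j = G j * F i)
    (HX HZ : Matrix (Fin 2 × V) ((ZMod m ⊕ ZMod m) × V) (ZMod 2))
    (hHXF : ∀ (j : Fin 2) (v : V) (ℓ : ZMod m) (w : V),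
      HX (j, v) (Sum.inl ℓ, w) = F (ℓ - ((j : ℕ) : ZMod m)) v w)
    (hHXG : ∀ (j : Fin 2) (v : V) (ℓ : ZMod m) (w : V),
      HX (j, v) (Sum.inr ℓ, w) = G (ℓ - ((j : ℕ) : ZMod m)) v w)
    (hHZG : ∀ (k : Fin 2) (v : V) (ℓ : ZMod m) (w : V),
      HZ (k, v) (Sum.inl ℓ, w) = (G (((k : ℕ) : ZMod m) - ℓ))ᵀ v w)
    (hHZF : ∀ (k : Fin 2) (v : V) (ℓ : ZMod m) (w : V),
      HZ (k, v) (Sum.inr ℓ, w) = (F (((k : ℕ) : ZMod m) - ℓ))ᵀ v w) :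
    (∀ j k : Fin 2,
      ∑ ℓ : ZMod m,
        (F (ℓ - ((j : ℕ) : ZMod m)) * G (((k : ℕ) : ZMod m) - ℓ) +
          G (((k : ℕ) : ZMod m) - ℓ) * F (ℓ - ((j : ℕ) : ZMod m))) = 0) ∧
    HX * HZᵀ = 0 :=
  hagiwara_imai_orthogonality_general F G hcomm _ _ HX HZ hHXF hHXG hHZG hHZF
end
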